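/- Directional derivative estimate in weighted norms: Let U and V be analytic vector fields on 𝕋ⁿ with finite weighted norms ‖U‖_u and ‖V‖_v, and let 0 < r < min{u, v}. Then ‖DU·V‖_r ≤ (1/(e(u−r))) ‖U‖_u ‖V‖_v, where DU·V = Σ_{k,l} i u_k ⟨k, v_{l−k}⟩ e^{i⟨l,θ⟩}. -/

import Mathlib

/-!
Multiplying the `l`-th coefficient of `DU·V` by the weight `e^{|l| r}` and using
`|l| ≤ |k| + |l - k|`, the weight splits into a factor for `u_k` and one for `v_{l-k}`.
The derivative costs a factor `|k|` (duality of the sum-norm and the max-norm), which is absorbed by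
`|k| e^{|k| r} ≤ e^{|k| u} / (e (u - r))` (`mul_exp_le`), since `x e^{-x}` is at most `1/e`.
So the weighted coefficients are dominated by the convolution of the two weighted coefficient
sequences (`weighted_term_le`), and the total mass of a convolution is the product of the masses,
by Fubini along the bijection `(l, k) ↦ (k, l - k)` (`convEquiv`).
-/

open scoped BigOperators
noncomputable section

/-- The sum-norm `|k| = Σᵢ |kᵢ|` of an integer vector `k ∈ ℤⁿ`. -/
def znorm {n : ℕ} (k : Fin n → ℤ) : ℝ := ∑ i, |(k i : ℝ)|

/-- The weighted norm `‖P‖ₛ = Σ_k ‖p_k‖ e^{|k| s}` of a vector field on the torus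
given by its Fourier coefficients `p : ℤⁿ → ℂⁿ` (max-norm on `ℂⁿ`). -/
def wnorm {n : ℕ} (p : (Fin n → ℤ) → (Fin n → ℂ)) (s : ℝ) : ℝ :=
  ∑' k, ‖p k‖ * Real.exp (znorm k * s)

/-- Fourier coefficients of the directional derivative `DU·V`:
`(DU·V)_l = Σ_k i u_k ⟨k, v_{l−k}⟩`. -/
def dirDeriv {n : ℕ} (u v : (Fin n → ℤ) → (Fin n → ℂ)) : (Fin n → ℤ) → (Fin n → ℂ) :=
  fun l => ∑' k, (Complex.I * ∑ i, (k i : ℂ) * v (l - k) i) • u k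

/-- Fourier coefficients of the Lie bracket `[U,V] = DV·U − DU·V`. -/
def lieCoeff {n : ℕ} (u v : (Fin n → ℤ) → (Fin n → ℂ)) : (Fin n → ℤ) → (Fin n → ℂ) :=
  fun l => dirDeriv v u l - dirDeriv u v l

lemma znorm_nonneg {n : ℕ} (k : Fin n → ℤ) : 0 ≤ znorm k :=
  Finset.sum_nonneg fun _ _ => abs_nonneg _

lemma znorm_le_add_sub {n : ℕ} (l k : Fin n → ℤ) : znorm l ≤ znorm k + znorm (l - k) := by
  unfold znorm
  rw [← Finset.sum_add_distrib]
  refine Finset.sum_le_sum fun i _ => ?_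
  have h : (l i : ℝ) = (k i : ℝ) + ((l - k) i : ℤ) := by simp
  rw [h]
  exact abs_add_le _ _

/-- Duality between the sum-norm on `ℤⁿ` and the max-norm on `ℂⁿ`. -/
lemma norm_pairing_le {n : ℕ} (k : Fin n → ℤ) (w : Fin n → ℂ) :
    ‖∑ i, (k i : ℂ) * w i‖ ≤ znorm k * ‖w‖ := by
  refine (norm_sum_le _ _).trans ?_
  rw [znorm, Finset.sum_mul]
  refine Finset.sum_le_sum fun i _ => ?_
  rw [norm_mul, Complex.norm_intCast]
  exact mul_le_mul_of_nonneg_left (norm_le_pi_norm w i) (abs_nonneg _)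

/-- The loss of one derivative costs the factor `1 / (e (u - r))` when the width of analyticity
shrinks from `u` to `r`. -/
lemma mul_exp_le {u r : ℝ} (hru : r < u) (x : ℝ) :
    x * Real.exp (x * r) ≤ 1 / (Real.exp 1 * (u - r)) * Real.exp (x * u) := by
  have hd : 0 < u - r := sub_pos.2 hru
  -- `e y ≤ e^y` at `y = x (u - r)`
  have h1 : x * (u - r) * Real.exp 1 ≤ Real.exp (x * (u - r)) := by
    have h := Real.add_one_le_exp (x * (u - r) - 1)
    calc x * (u - r) * Real.exp 1
        ≤ Real.exp (x * (u - r) - 1) * Real.exp 1 :=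
          mul_le_mul_of_nonneg_right (by linarith) (Real.exp_pos _).le
      _ = Real.exp (x * (u - r)) := by rw [← Real.exp_add]; congr 1; ring
  have h2 : Real.exp (x * u) = Real.exp (x * (u - r)) * Real.exp (x * r) := by
    rw [← Real.exp_add]; congr 1; ring
  rw [h2, div_mul_eq_mul_div, one_mul, le_div_iff₀ (by positivity)]
  calc x * Real.exp (x * r) * (Real.exp 1 * (u - r))
      = x * (u - r) * Real.exp 1 * Real.exp (x * r) := by ring
    _ ≤ _ := mul_le_mul_of_nonneg_right h1 (Real.exp_pos _).le

/-- Each weighted term of the series for `(DU·V)_l` is dominated by the corresponding term of the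
convolution of the weighted coefficient sequences of `U` and `V`. -/
lemma weighted_term_le {n : ℕ} (U V : (Fin n → ℤ) → (Fin n → ℂ)) {u v r : ℝ}
    (hr0 : 0 < r) (hru : r < u) (hrv : r < v) (l k : Fin n → ℤ) :
    ‖(Complex.I * ∑ i, (k i : ℂ) * V (l - k) i) • U k‖ * Real.exp (znorm l * r) ≤
      1 / (Real.exp 1 * (u - r)) * ((‖U k‖ * Real.exp (znorm k * u)) *
        (‖V (l - k)‖ * Real.exp (znorm (l - k) * v))) := by
  have hw : Real.exp (znorm l * r) ≤
      Real.exp (znorm k * r) * Real.exp (znorm (l - k) * v) := by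
    rw [← Real.exp_add]
    refine Real.exp_le_exp.2 ?_
    have h1 := mul_le_mul_of_nonneg_right (znorm_le_add_sub l k) hr0.le
    have h2 := mul_le_mul_of_nonneg_left hrv.le (znorm_nonneg (l - k))
    linarith
  have hk := mul_exp_le hru (znorm k)
  rw [norm_smul, norm_mul, Complex.norm_I, one_mul]
  calc ‖∑ i, (k i : ℂ) * V (l - k) i‖ * ‖U k‖ * Real.exp (znorm l * r)
      ≤ znorm k * ‖V (l - k)‖ * ‖U k‖ *
          (Real.exp (znorm k * r) * Real.exp (znorm (l - k) * v)) := by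
        have hz := znorm_nonneg k
        have hp := norm_pairing_le k (V (l - k))
        gcongr
    _ = (znorm k * Real.exp (znorm k * r)) *
          (‖U k‖ * (‖V (l - k)‖ * Real.exp (znorm (l - k) * v))) := by ring
    _ ≤ (1 / (Real.exp 1 * (u - r)) * Real.exp (znorm k * u)) *
          (‖U k‖ * (‖V (l - k)‖ * Real.exp (znorm (l - k) * v))) := by gcongr
    _ = _ := by ring

/-- The change of indices `(l, k) ↦ (k, l - k)` that turns a double sum over a convolution into
a product of sums. -/
def convEquiv (G : Type*) [AddCommGroup G] : G × G ≃ G × G where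
  toFun p := (p.2, p.1 - p.2)
  invFun q := (q.2 + q.1, q.1)
  left_inv p := by simp
  right_inv q := by simp

/-- **Directional derivative estimate in weighted norms.**
For analytic vector fields `U`, `V` on `𝕋ⁿ` with finite weighted norms `‖U‖_u`, `‖V‖_v`
and `0 < r < min{u,v}`, `‖DU·V‖_r ≤ (1/(e(u−r))) ‖U‖_u ‖V‖_v`. -/
theorem dirDeriv_weighted_estimate {n : ℕ}
    (U V : (Fin n → ℤ) → (Fin n → ℂ)) (u v r : ℝ)
    (hr0 : 0 < r) (hru : r < u) (hrv : r < v)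
    (hU : Summable fun k => ‖U k‖ * Real.exp (znorm k * u))
    (hV : Summable fun k => ‖V k‖ * Real.exp (znorm k * v)) :
    wnorm (dirDeriv U V) r ≤
      1 / (Real.exp 1 * (u - r)) * wnorm U u * wnorm V v := by
  set a : (Fin n → ℤ) → ℝ := fun k => ‖U k‖ * Real.exp (znorm k * u) with ha
  set b : (Fin n → ℤ) → ℝ := fun k => ‖V k‖ * Real.exp (znorm k * v) with hb
  set C : ℝ := 1 / (Real.exp 1 * (u - r)) with hC
  have ha0 : 0 ≤ a := fun k => by positivity
  have hb0 : 0 ≤ b := fun k => by positivity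
  have hab : Summable fun p : (Fin n → ℤ) × (Fin n → ℤ) => a p.1 * b p.2 :=
    hU.mul_of_nonneg hV ha0 hb0
  have hF : Summable fun p : (Fin n → ℤ) × (Fin n → ℤ) => C * (a p.2 * b (p.1 - p.2)) :=
    ((convEquiv (Fin n → ℤ)).summable_iff.2 hab).mul_left C
  have hfib : ∀ l, Summable fun k => C * (a k * b (l - k)) := fun l => hF.prod_factor l
  have hG : Summable fun l => ∑' k, C * (a k * b (l - k)) := hF.prod
  have hcoef : ∀ l, ‖dirDeriv U V l‖ * Real.exp (znorm l * r) ≤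
      ∑' k, C * (a k * b (l - k)) := by
    intro l
    have hterm := weighted_term_le U V hr0 hru hrv l
    have hw : 0 < Real.exp (znorm l * r) := Real.exp_pos _
    rw [← le_div_iff₀ hw]
    refine tsum_of_norm_bounded ((hfib l).hasSum.div_const _) fun k => ?_
    rw [le_div_iff₀ hw]
    exact hterm k
  calc wnorm (dirDeriv U V) r
      ≤ ∑' l, ∑' k, C * (a k * b (l - k)) :=
        (Summable.of_nonneg_of_le (fun l => by positivity) hcoef hG).tsum_le_tsum hcoef hG
    _ = ∑' p : (Fin n → ℤ) × (Fin n → ℤ), C * (a p.2 * b (p.1 - p.2)) := hF.tsum_prod.symm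
    _ = C * ∑' p : (Fin n → ℤ) × (Fin n → ℤ), a p.1 * b p.2 := by
        rw [tsum_mul_left]
        congr 1
        exact (convEquiv (Fin n → ℤ)).tsum_eq fun p => a p.1 * b p.2
    _ = C * ((∑' k, a k) * ∑' k, b k) := by rw [hU.tsum_mul_tsum hV hab]
    _ = C * wnorm U u * wnorm V v := by rw [mul_assoc]; rfl
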